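/- For every integer k ≥ 4, the number of 𝓢_k-free orientations of the complete graph K_{k+1} satisfies S_k(K_{k+1}) < 2^{t_{k-1}(k+1)}. -/

import Mathlib

open scoped Classical

noncomputable section

universe u

variable {V : Type u}

/-- An orientation of a simple graph `G`: a relation choosing exactly one
direction for each edge of `G`. -/
abbrev SimpleGraph.Orient (G : SimpleGraph V) : Type u :=
  {D : V → V → Prop // (∀ u v, D u v → G.Adj u v) ∧ ∀ u v, G.Adj u v → (D u v ↔ ¬ D v u)}

/-- A family of tournaments: for each `k`, a set of orientations of the
complete graph on `k` vertices. -/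
abbrev TournFamily : Type :=
  ∀ k : ℕ, Set ((⊤ : SimpleGraph (Fin k)).Orient)

/-- The orientation `D` of `G` contains a copy of the `k`-vertex tournament `T`. -/
def ContainsCopy {G : SimpleGraph V} (D : G.Orient) {k : ℕ}
    (T : (⊤ : SimpleGraph (Fin k)).Orient) : Prop :=
  ∃ φ : Fin k → V, Function.Injective φ ∧ ∀ i j, T.1 i j → D.1 (φ i) (φ j)

/-- The orientation `D` is `F`-free: it contains no copy of a member of `F`. -/
def FreeOrient {G : SimpleGraph V} (F : TournFamily) (D : G.Orient) : Prop :=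
  ∀ (k : ℕ) (T : (⊤ : SimpleGraph (Fin k)).Orient), T ∈ F k → ¬ ContainsCopy D T

/-- `D(G, F)`: the number of `F`-free orientations of the graph `G`. -/
def numOrient (G : SimpleGraph V) (F : TournFamily) : ℕ :=
  Nat.card {D : G.Orient // FreeOrient F D}

/-- `D(n, F)`: the maximum of `D(G, F)` over all `n`-vertex graphs `G`. -/
def maxOrient (n : ℕ) (F : TournFamily) : ℕ :=
  sSup (Set.range fun G : SimpleGraph (Fin n) => numOrient G F)

/-- A tournament is strongly connected if there is a directed path between
every ordered pair of vertices. -/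
def IsStrongTourn {k : ℕ} (T : (⊤ : SimpleGraph (Fin k)).Orient) : Prop :=
  ∀ u v : Fin k, Relation.ReflTransGen T.1 u v

/-- `𝓢 k`: the family of strongly connected tournaments on `k` vertices. -/
def SFam (k : ℕ) : TournFamily := fun m => {T | m = k ∧ IsStrongTourn T}

/-- `t r n`: the number of edges of the `r`-partite Turán graph on `n` vertices. -/
def turanNum (r n : ℕ) : ℕ := (SimpleGraph.turanGraph n r).edgeFinset.card

/-- The induced subdigraph on `S` is strongly connected, in cut form: every nonempty proper
subset of `S` has an edge leaving it inside `S`. -/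
def StrongOn (D : V → V → Prop) (S : Finset V) : Prop :=
  ∀ A ⊆ S, A.Nonempty → A ≠ S → ∃ a ∈ A, ∃ b ∈ S, b ∉ A ∧ D a b

theorem strongOn_singleton (D : V → V → Prop) (v : V) : StrongOn D {v} := by
  intro A hA hne hA'
  rcases Finset.subset_singleton_iff.1 hA with h | h
  · simp [h] at hne
  · exact absurd h hA'

theorem StrongOn.insert {D : V → V → Prop} {S : Finset V} (hS : StrongOn D S) {v s s' : V}
    (hs : s ∈ S) (hvs : D v s) (hs' : s' ∈ S) (hvs' : D s' v) : StrongOn D (insert v S) := by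
  intro A hA hne hA'
  by_cases h1 : (A ∩ S).Nonempty
  · by_cases h2 : A ∩ S = S
    · have hSA : S ⊆ A := Finset.inter_eq_right.1 h2
      refine ⟨s', hSA hs', v, Finset.mem_insert_self _ _, ?_, hvs'⟩
      intro hv
      exact hA' (hA.antisymm (Finset.insert_subset hv hSA))
    · obtain ⟨a, ha, b, hb, hba, hab⟩ := hS (A ∩ S) Finset.inter_subset_right h1 h2
      simp only [Finset.mem_inter] at ha hba
      exact ⟨a, ha.1, b, Finset.mem_insert_of_mem hb, fun h => hba ⟨h, hb⟩, hab⟩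
  · rw [Finset.not_nonempty_iff_eq_empty] at h1
    have h3 : ∀ x ∈ A, x ∉ S := fun x hx hxS => by
      have : x ∈ A ∩ S := Finset.mem_inter.2 ⟨hx, hxS⟩
      simp [h1] at this
    obtain ⟨a, ha⟩ := hne
    have hav : a = v := (Finset.mem_insert.1 (hA ha)).resolve_right (h3 a ha)
    exact ⟨a, ha, s, Finset.mem_insert_of_mem hs, fun h => h3 s h hs, hav ▸ hvs⟩

/-- If `o` dominates the nonempty set `S`, `S` dominates `i` and `i → o`, then the three together
are strongly connected. -/
theorem strongOn_insert_insert {D : V → V → Prop} {S : Finset V} (hS : S.Nonempty) {i o : V}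
    (ho : ∀ s ∈ S, D o s) (hi : ∀ s ∈ S, D s i) (hedge : D i o) :
    StrongOn D (insert i (insert o S)) := by
  intro A hA hne hA'
  by_cases hoA : o ∈ A
  · by_cases hSA : S ⊆ A
    · obtain ⟨s, hs⟩ := hS
      refine ⟨s, hSA hs, i, by simp, ?_, hi s hs⟩
      intro hiA
      exact hA' (hA.antisymm (Finset.insert_subset hiA (Finset.insert_subset hoA hSA)))
    · obtain ⟨s, hs, hsA⟩ := Finset.not_subset.1 hSA
      exact ⟨o, hoA, s, by simp [hs], hsA, ho s hs⟩
  · by_cases hiA : i ∈ A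
    · exact ⟨i, hiA, o, by simp, hoA, hedge⟩
    · obtain ⟨a, ha⟩ := hne
      have haS : a ∈ S := by
        have := hA ha
        simp only [Finset.mem_insert] at this
        rcases this with h | h | h
        · exact absurd (h ▸ ha) hiA
        · exact absurd (h ▸ ha) hoA
        · exact h
      exact ⟨a, ha, i, by simp, hiA, hi a haS⟩

theorem SimpleGraph.Orient.adj_or_adj (D : (⊤ : SimpleGraph V).Orient) {u v : V} (h : u ≠ v) :
    D.1 u v ∨ D.1 v u := by
  have := D.2.2 u v h
  tauto

theorem SimpleGraph.Orient.asymm {G : SimpleGraph V} (D : G.Orient) {u v : V}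
    (h : D.1 u v) : ¬ D.1 v u :=
  (D.2.2 u v (D.2.1 u v h)).1 h

/-- A strongly connected tournament on at least four vertices has a vertex whose deletion leaves a
strongly connected tournament. -/
theorem exists_strongOn_erase [Fintype V] (D : (⊤ : SimpleGraph V).Orient)
    (hV : 4 ≤ Fintype.card V) (hD : StrongOn D.1 Finset.univ) :
    ∃ v, StrongOn D.1 (Finset.univ.erase v) := by
  by_contra hno
  rw [not_exists] at hno
  have hsmall : ∀ S : Finset V, StrongOn D.1 S → S ≠ Finset.univ →
      S.card + 1 < Fintype.card V := by
    intro S hS hne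
    obtain ⟨v, hv⟩ : ∃ v, v ∉ S := by
      by_contra! h
      exact hne (Finset.eq_univ_iff_forall.2 h)
    have hsub : S ⊆ Finset.univ.erase v := fun x hx => by
      simp only [Finset.mem_erase, Finset.mem_univ, and_true]
      rintro rfl
      exact hv hx
    have hss : S ⊂ Finset.univ.erase v :=
      hsub.ssubset_of_ne fun h => hno v (h ▸ hS)
    have := Finset.card_lt_card hss
    rw [Finset.card_erase_of_mem (Finset.mem_univ v), Finset.card_univ] at this
    omega
  obtain ⟨x⟩ : Nonempty V := Fintype.card_pos_iff.1 (by omega)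
  obtain ⟨S, hSmem, hSmax⟩ := Finset.exists_max_image
    (Finset.univ.filter fun S : Finset V => S.Nonempty ∧ StrongOn D.1 S ∧ S ≠ Finset.univ)
    Finset.card ⟨{x}, by
      simp only [Finset.mem_filter, Finset.mem_univ, true_and]
      refine ⟨⟨x, by simp⟩, strongOn_singleton _ _, fun h => ?_⟩
      have := congrArg Finset.card h
      rw [Finset.card_univ, Finset.card_singleton] at this
      omega⟩
  simp only [Finset.mem_filter, Finset.mem_univ, true_and, and_imp] at hSmem hSmax
  obtain ⟨hSne, hS, hSu⟩ := hSmem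
  have hScard := hsmall S hS hSu
  have hmixed : ∀ v ∉ S, (∀ s ∈ S, D.1 v s) ∨ ∀ s ∈ S, D.1 s v := by
    intro v hv
    by_contra! h
    obtain ⟨⟨s, hs, hvs⟩, s', hs', hvs'⟩ := h
    have h1 : D.1 s v :=
      (D.adj_or_adj (u := s) (v := v) (by rintro rfl; exact hv hs)).resolve_right hvs
    have h2 : D.1 v s' :=
      (D.adj_or_adj (u := v) (v := s') (by rintro rfl; exact hv hs')).resolve_right hvs'
    have hc := Finset.card_insert_of_notMem hv
    have := hSmax (insert v S) (by simp) (hS.insert hs' h2 hs h1) (fun h => by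
      rw [h, Finset.card_univ] at hc
      omega)
    omega
  have hI : ∃ i ∉ S, ∀ s ∈ S, D.1 s i := by
    obtain ⟨a, ha, b, -, hb, hab⟩ := hD S (Finset.subset_univ _) hSne hSu
    exact ⟨b, hb, (hmixed b hb).resolve_left fun h => D.asymm hab (h a ha)⟩
  set I := Finset.univ.filter fun i => i ∉ S ∧ ∀ s ∈ S, D.1 s i with hIdef
  obtain ⟨i, hi, o, -, ho, hedge⟩ := hD I (Finset.subset_univ _)
    (by obtain ⟨i, hi⟩ := hI; exact ⟨i, by simpa [hIdef] using hi⟩)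
    (by
      intro h
      obtain ⟨s, hs⟩ := hSne
      have : s ∈ I := h ▸ Finset.mem_univ s
      simp only [hIdef, Finset.mem_filter] at this
      exact this.2.1 hs)
  simp only [hIdef, Finset.mem_filter, Finset.mem_univ, true_and] at hi ho
  have hoS : o ∉ S := fun h => D.asymm hedge (hi.2 o h)
  have hodom : ∀ s ∈ S, D.1 o s := (hmixed o hoS).resolve_right fun h => ho ⟨hoS, h⟩
  have hne : i ≠ o := D.2.1 i o hedge
  have hcard : ∀ S' ⊆ S, (insert i (insert o S')).card = S'.card + 2 := by
    intro S' hS'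
    rw [Finset.card_insert_of_notMem, Finset.card_insert_of_notMem (fun h => hoS (hS' h))]
    simp only [Finset.mem_insert, not_or]
    exact ⟨hne, fun h => hi.1 (hS' h)⟩
  have hext : ∀ S' ⊆ S, S'.Nonempty → StrongOn D.1 (insert i (insert o S')) := fun S' hS' h =>
    strongOn_insert_insert h (fun s hs => hodom s (hS' hs)) (fun s hs => hi.2 s (hS' hs)) hedge
  by_cases huniv : insert i (insert o S) = Finset.univ
  · have hc := hcard S subset_rfl
    rw [huniv, Finset.card_univ] at hc
    obtain ⟨s, hs⟩ := hSne
    have hce := Finset.card_erase_of_mem hs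
    have hne' : (S.erase s).Nonempty := Finset.card_pos.1 (by omega)
    have hc' := hcard (S.erase s) (Finset.erase_subset _ _)
    have := hsmall _ (hext (S.erase s) (Finset.erase_subset _ _) hne') (fun h => by
      rw [h, Finset.card_univ] at hc'
      omega)
    omega
  · have := hSmax _ (by simp) (hext S subset_rfl hSne) huniv
    rw [hcard S subset_rfl] at this
    omega

/-- An `𝓢_k`-free orientation has no strongly connected set of `k` vertices. -/
theorem FreeOrient.not_strongOn {k : ℕ} {D : (⊤ : SimpleGraph V).Orient}
    (hD : FreeOrient (SFam k) D) {S : Finset V} (hcard : S.card = k) : ¬ StrongOn D.1 S := by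
  intro hS
  let e : Fin k ≃ S := (S.equivFinOfCardEq hcard).symm
  have hinj : Function.Injective fun i => (e i : V) :=
    Subtype.val_injective.comp e.injective
  refine hD k ⟨fun i j => D.1 (e i) (e j), ?_, ?_⟩ ⟨rfl, ?_⟩
    ⟨fun i => e i, hinj, fun i j h => h⟩
  · intro u v h huv
    exact D.2.1 _ _ h (by rw [huv])
  · intro u v h
    exact D.2.2 _ _ (fun h' => h (hinj h'))
  · intro u v
    by_contra huv
    let A : Finset V := S.filter fun x => ∃ i, (e i : V) = x ∧
      Relation.ReflTransGen (fun i j => D.1 (e i) (e j)) u i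
    obtain ⟨a, ha, b, hb, hbA, hab⟩ := hS A (Finset.filter_subset _ _)
      ⟨e u, Finset.mem_filter.2 ⟨(e u).2, u, rfl, .refl⟩⟩ (fun h => by
        have : (e v : V) ∈ A := by
          rw [h]
          exact (e v).2
        obtain ⟨-, i, hi, hui⟩ := Finset.mem_filter.1 this
        exact huv (hinj hi ▸ hui))
    obtain ⟨-, i, hi, hui⟩ := Finset.mem_filter.1 ha
    refine hbA (Finset.mem_filter.2 ⟨hb, e.symm ⟨b, hb⟩, by simp, hui.tail ?_⟩)
    simpa [hi] using hab

/-- In an `𝓢_k`-free tournament on `k + 1` vertices, either some set `A` with `2 ≤ |A| ≤ k - 1` is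
dominated by its complement, or there are both a source and a sink. -/
theorem FreeOrient.exists_cut [Fintype V] {k : ℕ} (hk : 3 ≤ k) (hV : Fintype.card V = k + 1)
    {D : (⊤ : SimpleGraph V).Orient} (hD : FreeOrient (SFam k) D) :
    (∃ A : Finset V, 2 ≤ A.card ∧ A.card + 2 ≤ k + 1 ∧ ∀ b ∉ A, ∀ a ∈ A, D.1 b a) ∨
      ∃ u v : V, u ≠ v ∧ (∀ x, x ≠ u → D.1 u x) ∧ ∀ x, x ≠ v → D.1 x v := by
  have herase : ∀ v, ∃ A ⊆ Finset.univ.erase v, A.Nonempty ∧ A ≠ Finset.univ.erase v ∧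
      ∀ a ∈ A, ∀ b, b ≠ v → b ∉ A → D.1 b a := by
    intro v
    have h := hD.not_strongOn (S := Finset.univ.erase v) (by
      rw [Finset.card_erase_of_mem (Finset.mem_univ v), Finset.card_univ, hV]; rfl)
    simp only [StrongOn] at h
    push Not at h
    obtain ⟨A, hA, hne, hA', h⟩ := h
    refine ⟨A, hA, hne, hA', fun a ha b hbv hb => ?_⟩
    exact (D.adj_or_adj (by rintro rfl; exact hb ha)).resolve_right (h a ha b (by simp [hbv]) hb)
  have hnot : ¬ StrongOn D.1 Finset.univ := fun h => by
    obtain ⟨v, hv⟩ := exists_strongOn_erase D (by omega) h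
    refine hD.not_strongOn ?_ hv
    rw [Finset.card_erase_of_mem (Finset.mem_univ v), Finset.card_univ, hV]; rfl
  simp only [StrongOn] at hnot
  push Not at hnot
  obtain ⟨A, -, hne, hAu, hA⟩ := hnot
  replace hA : ∀ b ∉ A, ∀ a ∈ A, D.1 b a := fun b hb a ha =>
    (D.adj_or_adj (by rintro rfl; exact hb ha)).resolve_right (hA a ha b (by simp) hb)
  have hpos := hne.card_pos
  have hlt : A.card < k + 1 := by
    rw [← hV, ← Finset.card_univ]
    exact Finset.card_lt_card ((Finset.subset_univ A).ssubset_of_ne hAu)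
  have hcompl : ∀ B : Finset V, B.card = k → ∃ u, ∀ x, x ∉ B ↔ x = u := by
    intro B hB
    have : Bᶜ.card = 1 := by rw [Finset.card_compl, hV, hB]; omega
    obtain ⟨u, hu⟩ := Finset.card_eq_one.1 this
    exact ⟨u, fun x => by rw [← Finset.mem_compl, hu, Finset.mem_singleton]⟩
  have hsubcard : ∀ (v : V), ∀ B ⊆ Finset.univ.erase v, B ≠ Finset.univ.erase v → B.card < k := by
    intro v B hB hne
    have := Finset.card_lt_card (hB.ssubset_of_ne hne)
    rwa [Finset.card_erase_of_mem (Finset.mem_univ v), Finset.card_univ, hV] at this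
  by_cases h1 : A.card = 1
  · obtain ⟨v, rfl⟩ := Finset.card_eq_one.1 h1
    obtain ⟨B, hB, hBne, hB', hBdom⟩ := herase v
    have hvB : v ∉ B := fun h => by simpa using hB h
    have hBlt := hsubcard v B hB hB'
    have hBpos := hBne.card_pos
    have hc := Finset.card_insert_of_notMem hvB
    have hdom : ∀ b ∉ insert v B, ∀ a ∈ insert v B, D.1 b a := by
      intro b hb a ha
      simp only [Finset.mem_insert, not_or] at hb ha
      rcases ha with rfl | ha
      · exact hA b (by simpa using hb.1) _ (by simp)
      · exact hBdom a ha b hb.1 hb.2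
    by_cases h2 : (insert v B).card = k
    · obtain ⟨u, hu⟩ := hcompl _ h2
      have huB := (hu u).2 rfl
      refine .inr ⟨u, v, ?_, fun x hx => hdom u huB x ?_, fun x hx => hA x (by simpa using hx) v
        (by simp)⟩
      · rintro rfl
        simp at huB
      · by_contra h
        exact hx ((hu x).1 h)
    · exact .inl ⟨insert v B, by omega, by omega, hdom⟩
  · by_cases h2 : A.card = k
    · obtain ⟨u, hu⟩ := hcompl A h2
      have hsrc : ∀ x, x ≠ u → D.1 u x := fun x hx =>
        hA u ((hu u).2 rfl) x (by by_contra h; exact hx ((hu x).1 h))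
      obtain ⟨B, hB, hBne, hB', hBdom⟩ := herase u
      have huB : u ∉ B := fun h => by simpa using hB h
      have hBlt := hsubcard u B hB hB'
      have hBpos := hBne.card_pos
      have hdom : ∀ b ∉ B, ∀ a ∈ B, D.1 b a := by
        intro b hb a ha
        by_cases hbu : b = u
        · subst hbu
          exact hsrc a (by rintro rfl; exact huB ha)
        · exact hBdom a ha b hbu hb
      by_cases h3 : B.card = 1
      · obtain ⟨v, rfl⟩ := Finset.card_eq_one.1 h3
        exact .inr ⟨u, v, by simpa using huB, hsrc, fun x hx => hdom x (by simpa using hx) v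
          (by simp)⟩
      · exact .inl ⟨B, by omega, by omega, hdom⟩
    · exact .inl ⟨A, by omega, by omega, hA⟩

theorem orient_ext_of_lt [LinearOrder V] {D D' : (⊤ : SimpleGraph V).Orient}
    (h : ∀ i j, i < j → (D.1 i j ↔ D'.1 i j)) : D = D' := by
  ext i j
  rcases lt_trichotomy i j with hij | rfl | hij
  · exact h i j hij
  · exact iff_of_false (fun h => D.2.1 _ _ h rfl) (fun h => D'.2.1 _ _ h rfl)
  · rw [D.2.2 i j hij.ne', D'.2.2 i j hij.ne', h j i hij]

/-- The tournaments in which `p.1 → p.2` for every pair `p ∈ P`. -/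
def prescribedOrient [Fintype V] (P : Finset (V × V)) : Finset (⊤ : SimpleGraph V).Orient :=
  Finset.univ.filter fun D => ∀ p ∈ P, D.1 p.1 p.2

theorem mem_prescribedOrient [Fintype V] {P : Finset (V × V)} {D : (⊤ : SimpleGraph V).Orient} :
    D ∈ prescribedOrient P ↔ ∀ p ∈ P, D.1 p.1 p.2 := by
  simp [prescribedOrient]

/-- The edges whose direction is determined by `u` being a source and `v` a sink. -/
def sourceSinkPairs {n : ℕ} (u v : Fin n) : Finset (Fin n × Fin n) :=
  {u} ×ˢ {u}ᶜ ∪ {u, v}ᶜ ×ˢ {v}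

/-- Prescribing the directions of the pairs in `P` divides the number of tournaments by at least
`2 ^ |P|`. -/
theorem card_prescribedOrient_le {n : ℕ} (P : Finset (Fin n × Fin n))
    (hP : ∀ p ∈ P, p.1 ≠ p.2 ∧ p.swap ∉ P) :
    (prescribedOrient P).card ≤ 2 ^ (n.choose 2 - P.card) := by
  let E : Finset (Fin n × Fin n) := Finset.univ.filter fun p => p.1 < p.2
  have hE : E.card = n.choose 2 := by
    simp only [E, Finset.card_filter, Fintype.sum_prod_type_right]
    simp only [← Finset.card_filter, Finset.filter_gt_eq_Iio, Fin.card_Iio]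
    rw [Fin.sum_univ_eq_sum_range (fun i => i), Finset.sum_range_id, Nat.choose_two_right]
  let Q := E.filter fun p => p ∈ P ∨ p.swap ∈ P
  have hQ : P.card ≤ Q.card := by
    refine Finset.card_le_card_of_injOn (fun p => if p.1 < p.2 then p else p.swap) ?_ ?_
    · intro p hp
      have h := hP p hp
      rcases lt_or_gt_of_ne h.1 with hlt | hlt
      · simpa [Q, E, hlt] using Or.inl hp
      · simpa [Q, E, hlt, hlt.not_gt] using Or.inr hp
    · intro p hp q hq h
      have h1 := (hP p hp).2
      have h2 := (hP q hq).2
      dsimp only at h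
      split_ifs at h
      · exact h
      · exact absurd (h ▸ hp) h2
      · exact absurd (h ▸ hq) h1
      · exact Prod.swap_injective h
  have hEQ : (E \ Q).card ≤ n.choose 2 - P.card := by
    rw [Finset.card_sdiff_of_subset (Finset.filter_subset _ _), hE]
    exact Nat.sub_le_sub_left hQ _
  calc _ ≤ (E \ Q).powerset.card := by
        refine Finset.card_le_card_of_injOn (fun D => (E \ Q).filter fun p => D.1 p.1 p.2) ?_ ?_
        · intro D _
          exact Finset.mem_coe.2 (Finset.mem_powerset.2 (Finset.filter_subset _ _))
        · intro D hD D' hD' h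
          rw [Finset.mem_coe, mem_prescribedOrient] at hD hD'
          have key : ∀ i j, i < j → (D.1 i j ↔ D'.1 i j) := by
            intro i j hij
            by_cases hq : (i, j) ∈ Q
            · rcases (Finset.mem_filter.1 hq).2 with hp | hp
              · exact iff_of_true (hD _ hp) (hD' _ hp)
              · exact iff_of_false (D.asymm (hD _ hp)) (D'.asymm (hD' _ hp))
            · have hm : (i, j) ∈ E \ Q := by simp [E, hij, hq]
              have := Finset.ext_iff.1 h (i, j)
              simpa only [Finset.mem_filter, hm, true_and] using this
          exact orient_ext_of_lt key
    _ = 2 ^ (E \ Q).card := Finset.card_powerset _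
    _ ≤ _ := Nat.pow_le_pow_right (by norm_num) hEQ

theorem numOrient_eq_card_filter (G : SimpleGraph V) [Fintype G.Orient] (F : TournFamily) :
    numOrient G F = (Finset.univ.filter fun D : G.Orient => FreeOrient F D).card := by
  rw [numOrient, Nat.card_eq_fintype_card, Fintype.card_subtype]

/-- The number of tournaments in which `A` is dominated by its complement. -/
theorem card_orient_cut_le {n : ℕ} (A : Finset (Fin n)) :
    (prescribedOrient (Aᶜ ×ˢ A)).card ≤ 2 ^ (n.choose 2 - (n - A.card) * A.card) := by
  have hcard : (Aᶜ ×ˢ A).card = (n - A.card) * A.card := by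
    rw [Finset.card_product, Finset.card_compl, Fintype.card_fin]
  rw [← hcard]
  refine card_prescribedOrient_le _ ?_
  rintro ⟨a, b⟩ hp
  simp only [Finset.mem_product, Finset.mem_compl, Prod.swap] at hp ⊢
  exact ⟨fun h => hp.1 (h ▸ hp.2), fun h => hp.1 h.2⟩

/-- The number of tournaments with a given source and a given sink. -/
theorem card_orient_source_sink_le {k : ℕ} {u v : Fin (k + 1)} (huv : u ≠ v) :
    (prescribedOrient (sourceSinkPairs u v)).card ≤
      2 ^ ((k + 1).choose 2 - (2 * k - 1)) := by
  have hcard : (sourceSinkPairs u v).card = 2 * k - 1 := by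
    rw [sourceSinkPairs, Finset.card_union_of_disjoint]
    · simp only [Finset.card_product, Finset.card_compl, Finset.card_singleton,
        Finset.card_pair huv, Fintype.card_fin]
      omega
    · rw [Finset.disjoint_left]
      rintro ⟨a, b⟩ h h'
      simp only [Finset.mem_product, Finset.mem_compl, Finset.mem_singleton, Finset.mem_insert,
        not_or] at h h'
      exact h'.1.1 h.1
  rw [← hcard]
  refine card_prescribedOrient_le _ ?_
  rintro ⟨a, b⟩ hp
  simp only [sourceSinkPairs, Finset.mem_union, Finset.mem_product, Finset.mem_compl, Prod.swap,
    Finset.mem_singleton, Finset.mem_insert, not_or] at hp ⊢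
  grind

/-- Union bound for the number of `𝓢_k`-free orientations of `K_{k+1}`. -/
theorem numOrient_complete_le_sum {k : ℕ} (hk : 3 ≤ k) :
    numOrient (⊤ : SimpleGraph (Fin (k + 1))) (SFam k) ≤
      (∑ m ∈ Finset.range (k + 2), (k + 1).choose m *
        if 2 ≤ m ∧ m + 2 ≤ k + 1 then 2 ^ ((k + 1).choose 2 - (k + 1 - m) * m) else 0) +
      (k + 1) * k * 2 ^ ((k + 1).choose 2 - (2 * k - 1)) := by
  have hcover : (Finset.univ.filter fun D : (⊤ : SimpleGraph (Fin (k + 1))).Orient =>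
      FreeOrient (SFam k) D) ⊆
      ((Finset.univ.filter fun A : Finset (Fin (k + 1)) =>
        2 ≤ A.card ∧ A.card + 2 ≤ k + 1).biUnion fun A => prescribedOrient (Aᶜ ×ˢ A)) ∪
        (Finset.univ.offDiag).biUnion fun q => prescribedOrient (sourceSinkPairs q.1 q.2) := by
    intro D hD
    rcases FreeOrient.exists_cut hk (Fintype.card_fin _) (Finset.mem_filter.1 hD).2 with
      ⟨A, h1, h2, hA⟩ | ⟨u, v, huv, hu, hv⟩
    · refine Finset.mem_union_left _ (Finset.mem_biUnion.2
        ⟨A, Finset.mem_filter.2 ⟨Finset.mem_univ _, h1, h2⟩, mem_prescribedOrient.2 ?_⟩)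
      intro p hp
      rw [Finset.mem_product, Finset.mem_compl] at hp
      exact hA _ hp.1 _ hp.2
    · refine Finset.mem_union_right _ (Finset.mem_biUnion.2
        ⟨(u, v), by simpa using huv, mem_prescribedOrient.2 ?_⟩)
      intro p hp
      simp only [sourceSinkPairs, Finset.mem_union, Finset.mem_product, Finset.mem_compl,
        Finset.mem_singleton, Finset.mem_insert, not_or] at hp
      rcases hp with ⟨h, h'⟩ | ⟨h, h'⟩
      · exact h ▸ hu _ h'
      · exact h' ▸ hv _ h.2
  rw [numOrient_eq_card_filter]
  refine (Finset.card_le_card hcover).trans ((Finset.card_union_le _ _).trans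
    (Nat.add_le_add ?_ ?_))
  · refine Finset.card_biUnion_le.trans
      ((Finset.sum_le_sum fun A _ => card_orient_cut_le A).trans_eq ?_)
    have h := Finset.sum_powerset_apply_card (x := (Finset.univ : Finset (Fin (k + 1)))) fun m =>
      if 2 ≤ m ∧ m + 2 ≤ k + 1 then 2 ^ ((k + 1).choose 2 - (k + 1 - m) * m) else 0
    simp only [Finset.powerset_univ, Finset.card_univ, Fintype.card_fin, smul_eq_mul] at h
    rw [← h, Finset.sum_filter]
  · refine Finset.card_biUnion_le.trans ((Finset.sum_le_sum fun q hq =>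
      card_orient_source_sink_le (Finset.mem_offDiag.1 hq).2.2).trans_eq ?_)
    rw [Finset.sum_const, Finset.offDiag_card, Finset.card_univ, Fintype.card_fin, smul_eq_mul,
      ← Nat.mul_sub_one, Nat.add_sub_cancel]

theorem turanNum_pred_succ {k : ℕ} (hk : 4 ≤ k) :
    turanNum (k - 1) (k + 1) = (k + 1).choose 2 - 2 := by
  obtain ⟨r, rfl⟩ : ∃ r, k = r + 1 := ⟨k - 1, by omega⟩
  have hmod : (r + 1 + 1) % r = 2 := by
    rw [show r + 1 + 1 = 2 + r by ring, Nat.add_mod_right, Nat.mod_eq_of_lt (by omega)]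
  have h := SimpleGraph.card_edgeFinset_turanGraph (n := r + 1 + 1) (r := r)
  rw [hmod] at h
  have hdiv : ((r + 1 + 1) ^ 2 - 2 ^ 2) * (r - 1) / (2 * r) = (r + 4) * (r - 1) / 2 := by
    rw [show (r + 1 + 1) ^ 2 - 2 ^ 2 = r * (r + 4) by
      rw [show (r + 1 + 1) ^ 2 = r * (r + 4) + 2 ^ 2 by ring]; simp, mul_assoc, mul_comm 2 r,
      Nat.mul_div_mul_left _ _ (by omega)]
  rw [hdiv] at h
  have hturan : turanNum r (r + 1 + 1) = (r + 4) * (r - 1) / 2 + Nat.choose 2 2 := by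
    rw [← h, turanNum]
  rw [Nat.add_sub_cancel, hturan, Nat.choose_self, Nat.choose_two_right]
  obtain ⟨s, rfl⟩ : ∃ s, r = s + 1 := ⟨r - 1, by omega⟩
  simp only [Nat.add_sub_cancel]
  rw [show (s + 1 + 1 + 1) * (s + 1 + 1) = (s + 1 + 4) * s + 2 * 3 by ring,
    Nat.add_mul_div_left _ _ (by norm_num)]
  omega

theorem FreeOrient.not_fourCycle {D : (⊤ : SimpleGraph V).Orient}
    (hD : FreeOrient (SFam 4) D) {a b c d : V} (hab : D.1 a b) (hbc : D.1 b c) (hcd : D.1 c d)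
    (hda : D.1 d a) (hac : a ≠ c) (hbd : b ≠ d) : False := by
  have h1 : a ≠ b := D.2.1 _ _ hab
  have h2 : b ≠ c := D.2.1 _ _ hbc
  have h3 : c ≠ d := D.2.1 _ _ hcd
  have h4 : d ≠ a := D.2.1 _ _ hda
  refine hD.not_strongOn (S := {a, b, c, d}) ?_ ?_
  · rw [Finset.card_insert_of_notMem (by simp [h1, hac, h4.symm]),
      Finset.card_insert_of_notMem (by simp [h2, hbd]), Finset.card_pair h3]
  · intro A hA hne hA'
    by_contra! hno
    have step : ∀ {x y}, x ∈ A → y ∈ ({a, b, c, d} : Finset V) → D.1 x y → y ∈ A :=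
      fun {x y} hx hy hxy => by
        by_contra h
        exact hno x hx y hy h hxy
    have ha := fun h : a ∈ A => step h (y := b) (by simp) hab
    have hb := fun h : b ∈ A => step h (y := c) (by simp) hbc
    have hc := fun h : c ∈ A => step h (y := d) (by simp) hcd
    have hd := fun h : d ∈ A => step h (y := a) (by simp) hda
    have hall : a ∈ A ∧ b ∈ A ∧ c ∈ A ∧ d ∈ A := by
      obtain ⟨x, hx⟩ := hne
      have := hA hx
      simp only [Finset.mem_insert, Finset.mem_singleton] at this
      rcases this with rfl | rfl | rfl | rfl <;> tauto
    refine hA' (hA.antisymm ?_)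
    intro x hx
    simp only [Finset.mem_insert, Finset.mem_singleton] at hx
    rcases hx with rfl | rfl | rfl | rfl <;> tauto


/-- Whether a four-vertex tournament on `w, x, y, z` has a directed four-cycle, in terms of the
directions of `wx`, `wy`, `wz`, `xy`, `xz`, `yz`. -/
def hasFourCycle (wx wy wz xy xz yz : Bool) : Bool :=
  let cyc := fun p q r s : Bool => (p && q && r && s) || (!p && !q && !r && !s)
  cyc wx xy yz (!wz) || cyc wx xz (!yz) (!wy) || cyc wy (!xy) xz (!wz)

/-- The ten edge directions of a five-vertex tournament. -/
abbrev FiveCode : Type :=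
  Bool × Bool × Bool × Bool × Bool × Bool × Bool × Bool × Bool × Bool

/-- Whether a five-vertex tournament has no directed four-cycle. -/
def fourCycleFree : FiveCode → Bool
  | (e01, e02, e03, e04, e12, e13, e14, e23, e24, e34) =>
    !(hasFourCycle e01 e02 e03 e12 e13 e23 || hasFourCycle e01 e02 e04 e12 e14 e24 ||
      hasFourCycle e01 e03 e04 e13 e14 e34 || hasFourCycle e02 e03 e04 e23 e24 e34 ||
      hasFourCycle e12 e13 e14 e23 e24 e34)

/-- The edge directions of a tournament on `Fin 5`. -/
def fiveCode (D : (⊤ : SimpleGraph (Fin 5)).Orient) : FiveCode :=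
  (decide (D.1 0 1), decide (D.1 0 2), decide (D.1 0 3), decide (D.1 0 4), decide (D.1 1 2),
    decide (D.1 1 3), decide (D.1 1 4), decide (D.1 2 3), decide (D.1 2 4), decide (D.1 3 4))

theorem fiveCode_injective : Function.Injective fiveCode := by
  intro D D' h
  simp only [fiveCode, Prod.mk.injEq, decide_eq_decide] at h
  refine orient_ext_of_lt fun i j hij => ?_
  fin_cases i <;> fin_cases j <;> first | exact absurd hij (by decide) | simp_all

theorem FreeOrient.hasFourCycle_eq_false {D : (⊤ : SimpleGraph V).Orient}
    (hD : FreeOrient (SFam 4) D) {w x y z : V} (hwx : w ≠ x) (hwy : w ≠ y) (hwz : w ≠ z)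
    (hxy : x ≠ y) (hxz : x ≠ z) (hyz : y ≠ z) :
    hasFourCycle (decide (D.1 w x)) (decide (D.1 w y)) (decide (D.1 w z)) (decide (D.1 x y))
      (decide (D.1 x z)) (decide (D.1 y z)) = false := by
  rw [Bool.eq_false_iff]
  intro h
  simp only [hasFourCycle, Bool.or_eq_true, Bool.and_eq_true, Bool.not_eq_true', Bool.not_not,
    decide_eq_true_eq, decide_eq_false_iff_not, ← D.2.2 y x hxy.symm,
    ← D.2.2 x w hwx.symm, ← D.2.2 y w hwy.symm, ← D.2.2 z w hwz.symm, ← D.2.2 z x hxz.symm,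
    ← D.2.2 z y hyz.symm] at h
  rcases h with ((⟨⟨⟨h1, h2⟩, h3⟩, h4⟩ | ⟨⟨⟨h1, h2⟩, h3⟩, h4⟩) |
    (⟨⟨⟨h1, h2⟩, h3⟩, h4⟩ | ⟨⟨⟨h1, h2⟩, h3⟩, h4⟩)) |
    (⟨⟨⟨h1, h2⟩, h3⟩, h4⟩ | ⟨⟨⟨h1, h2⟩, h3⟩, h4⟩)
  · exact hD.not_fourCycle h1 h2 h3 h4 hwy hxz
  · exact hD.not_fourCycle h4 h3 h2 h1 hwy hxz.symm
  · exact hD.not_fourCycle h1 h2 h3 h4 hwz hxy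
  · exact hD.not_fourCycle h4 h3 h2 h1 hwz hxy.symm
  · exact hD.not_fourCycle h1 h2 h3 h4 hwx hyz
  · exact hD.not_fourCycle h4 h3 h2 h1 hwx hyz.symm

theorem card_fourCycleFree :
    (Finset.univ.filter fun c : FiveCode => fourCycleFree c = true).card = 240 := by
  decide +kernel

theorem numOrient_complete_five_le :
    numOrient (⊤ : SimpleGraph (Fin 5)) (SFam 4) ≤ 240 := by
  rw [numOrient_eq_card_filter, ← card_fourCycleFree]
  refine Finset.card_le_card_of_injOn fiveCode (fun D hD => ?_) fiveCode_injective.injOn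
  have hF : FreeOrient (SFam 4) D := (Finset.mem_filter.1 hD).2
  refine Finset.mem_coe.2 (Finset.mem_filter.2 ⟨Finset.mem_univ _, ?_⟩)
  rw [fiveCode, fourCycleFree, hF.hasFourCycle_eq_false, hF.hasFourCycle_eq_false,
    hF.hasFourCycle_eq_false, hF.hasFourCycle_eq_false, hF.hasFourCycle_eq_false]
  · rfl
  all_goals decide

theorem numOrient_complete_six_lt :
    numOrient (⊤ : SimpleGraph (Fin 6)) (SFam 5) < 2 ^ 13 :=
  (numOrient_complete_le_sum (k := 5) (by norm_num)).trans_lt (by decide)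

/-- For `k ≥ 6` the union bound is less than a quarter of all tournaments. -/
theorem sum_cut_add_source_sink_lt {k : ℕ} (hk : 6 ≤ k) :
    (∑ m ∈ Finset.range (k + 2), (k + 1).choose m *
        if 2 ≤ m ∧ m + 2 ≤ k + 1 then 2 ^ ((k + 1).choose 2 - (k + 1 - m) * m) else 0) +
      (k + 1) * k * 2 ^ ((k + 1).choose 2 - (2 * k - 1)) < 2 ^ ((k + 1).choose 2 - 2) := by
  have hchoose : 2 * k + 2 ≤ (k + 1).choose 2 := by
    rw [Nat.choose_two_right, Nat.add_sub_cancel, Nat.le_div_iff_mul_le (by norm_num)]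
    nlinarith
  obtain ⟨N, hN⟩ := Nat.exists_eq_add_of_le hchoose
  rw [hN]
  have hsum : (∑ m ∈ Finset.range (k + 2), (k + 1).choose m *
      if 2 ≤ m ∧ m + 2 ≤ k + 1 then 2 ^ (2 * k + 2 + N - (k + 1 - m) * m) else 0) ≤
      2 ^ (k + 1) * 2 ^ (N + 4) := by
    rw [← Nat.sum_range_choose, Finset.sum_mul]
    refine Finset.sum_le_sum fun m _ => Nat.mul_le_mul_left _ ?_
    split_ifs with h
    · refine Nat.pow_le_pow_right (by norm_num) ?_
      obtain ⟨a, rfl⟩ := Nat.exists_eq_add_of_le h.1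
      obtain ⟨b, hb⟩ : ∃ b, k = a + b + 3 := ⟨k - a - 3, by omega⟩
      subst hb
      rw [show a + b + 3 + 1 - (2 + a) = b + 2 by omega]
      have : 2 * a + 2 * b + 4 ≤ (b + 2) * (2 + a) := by nlinarith [Nat.zero_le (a * b)]
      omega
    · exact Nat.zero_le _
  have hsq : ∀ k : ℕ, 6 ≤ k → (k + 1) * k ≤ 2 ^ k := by
    intro k hk
    induction k, hk using Nat.le_induction with
    | base => norm_num
    | succ k hk ih =>
      rw [pow_succ]
      nlinarith
  have h6 : 2 ^ k = 2 ^ 6 * 2 ^ (k - 6) := by rw [← pow_add]; congr 1; omega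
  have hpow : 2 ^ (2 * k + 2 + N - 2) = 2 ^ k * (2 ^ 6 * 2 ^ (k - 6)) * 2 ^ N := by
    rw [← h6, ← pow_add, ← pow_add]; congr 1; omega
  have hexp : 2 * k + 2 + N - (2 * k - 1) = N + 3 := by omega
  rw [hpow, hexp]
  have hone : 1 ≤ 2 ^ (k - 6) := Nat.one_le_two_pow
  have hpos : 0 < 2 ^ k * 2 ^ N := by positivity
  calc _ ≤ 2 ^ (k + 1) * 2 ^ (N + 4) + 2 ^ k * 2 ^ (N + 3) :=
        Nat.add_le_add hsum (Nat.mul_le_mul_right _ (hsq k hk))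
    _ = 40 * (2 ^ k * 2 ^ N) := by ring
    _ < 2 ^ 6 * (2 ^ k * 2 ^ N) * 1 := by omega
    _ ≤ 2 ^ 6 * (2 ^ k * 2 ^ N) * 2 ^ (k - 6) := Nat.mul_le_mul_left _ hone
    _ = _ := by ring

/-- For `k ≥ 4`, the number of `𝓢_k`-free orientations of `K_{k+1}` is less than
`2 ^ t_{k-1}(k+1)`. -/
theorem numOrient_complete_k_succ_lt (k : ℕ) (hk : 4 ≤ k) :
    numOrient (⊤ : SimpleGraph (Fin (k + 1))) (SFam k) < 2 ^ turanNum (k - 1) (k + 1) := by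
  rw [turanNum_pred_succ hk]
  rcases (by omega : k = 4 ∨ k = 5 ∨ 6 ≤ k) with rfl | rfl | hk
  · exact numOrient_complete_five_le.trans_lt (by decide)
  · exact numOrient_complete_six_lt
  · exact (numOrient_complete_le_sum (by omega)).trans_lt (sum_cut_add_source_sink_lt hk)
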